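/- (Basic property of standard representations) Let B be a set of labeled polynomials and let f^[u] be a labeled polynomial with f ≠ 0. If f^[u] has a standard representation w.r.t. B, then there exists g^[v] ∈ B with g ≠ 0, lpp(g) dividing lpp(f), and s(x^t v) ⪯₂ s(u), where x^t = lpp(f)/lpp(g). -/

import Mathlib

/-! The monomial `lpp f` occurs in some summand `p g` of the standard representation, and the bound
on the summands then forces `lpp f = lpp (p g) = lpp p + lpp g` in exponents. Take `x^t = lpp p`.
Since leading monomials are multiplicative over a field, `x^t v` and `p v` have the same leading
monomial in every component. As `≺₂` refines `≺₁` on each component, these leading monomials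
determine the signature, so `s(x^t v) = s(p v) ⪯₂ s(u)`. -/

open MvPolynomial

noncomputable section

variable {k : Type*} [Field k] {m n : ℕ}

/-- The leading power product of a polynomial, w.r.t. the monomial order `L1`;
`⊥` for the zero polynomial. -/
def lpp (L1 : LinearOrder (Fin n →₀ ℕ)) (f : MvPolynomial (Fin n) k) :
    WithBot (Fin n →₀ ℕ) :=
  @Finset.max _ L1 f.support

/-- The leading coefficient of a polynomial w.r.t. the monomial order `L1`. -/
def plc (L1 : LinearOrder (Fin n →₀ ℕ)) (f : MvPolynomial (Fin n) k) : k :=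
  WithBot.recBotCoe 0 (fun α => MvPolynomial.coeff α f) (lpp L1 f)

/-- The support of a module element `u ∈ R^m`, as a set of module monomials `(i, α)`. -/
def msupport (u : Fin m → MvPolynomial (Fin n) k) : Finset (Fin m × (Fin n →₀ ℕ)) :=
  Finset.univ.biUnion fun i => (u i).support.image fun α => (i, α)

/-- The signature of a module element, w.r.t. the module term order `L2`;
`⊥` for the zero element. -/
def sig (L2 : LinearOrder (Fin m × (Fin n →₀ ℕ))) (u : Fin m → MvPolynomial (Fin n) k) :
    WithBot (Fin m × (Fin n →₀ ℕ)) :=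
  @Finset.max _ L2 (msupport u)

/-- The leading coefficient of a module element (the coefficient at its signature). -/
def mlc (L2 : LinearOrder (Fin m × (Fin n →₀ ℕ))) (u : Fin m → MvPolynomial (Fin n) k) : k :=
  WithBot.recBotCoe 0 (fun p => MvPolynomial.coeff p.2 (u p.1)) (sig L2 u)

/-- The strict order on `WithBot β` induced by a linear order `L` on `β`
(`⊥` smaller than everything). -/
def bslt {β : Type*} (L : LinearOrder β) (a b : WithBot β) : Prop :=
  WithBot.recBotCoe False (fun y => WithBot.recBotCoe True (fun x => L.lt x y) a) b

/-- The order on `WithBot β` induced by a linear order `L` on `β`. -/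
def bsle {β : Type*} (L : LinearOrder β) (a b : WithBot β) : Prop :=
  WithBot.recBotCoe (a = ⊥) (fun y => WithBot.recBotCoe True (fun x => L.le x y) a) b

/-- Multiplication of a module element by the monomial `x^t`. -/
def tsmul (t : Fin n →₀ ℕ) (u : Fin m → MvPolynomial (Fin n) k) :
    Fin m → MvPolynomial (Fin n) k :=
  fun i => monomial t (1 : k) * u i

/-- `u ⬝ f⃗ = u₁ f₁ + ⋯ + u_m f_m`. -/
def dotf (fvec u : Fin m → MvPolynomial (Fin n) k) : MvPolynomial (Fin n) k :=
  ∑ i, u i * fvec i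

/-- The least common multiple of two monomials (componentwise max of exponents). -/
def mlcm (α β : Fin n →₀ ℕ) : Fin n →₀ ℕ :=
  Finsupp.zipWith max (max_self 0) α β

/-- `G` is a labeled Gröbner basis of `(f₁, …, f_m)`. -/
def IsLabeledGB (L1 : LinearOrder (Fin n →₀ ℕ)) (L2 : LinearOrder (Fin m × (Fin n →₀ ℕ)))
    (fvec : Fin m → MvPolynomial (Fin n) k)
    (G : Set (MvPolynomial (Fin n) k × (Fin m → MvPolynomial (Fin n) k))) : Prop :=
  ∀ (f : MvPolynomial (Fin n) k) (u : Fin m → MvPolynomial (Fin n) k),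
    f = dotf fvec u → f ≠ 0 →
      ∃ gv ∈ G, gv.1 ≠ 0 ∧ ∃ t : Fin n →₀ ℕ,
        WithBot.map (fun β => t + β) (lpp L1 gv.1) = lpp L1 f ∧
        bsle L2 (sig L2 (tsmul t gv.2)) (sig L2 u)

/-- `f^[u]` has a standard representation w.r.t. the set `B` of labeled polynomials. -/
def HasStdRep (L1 : LinearOrder (Fin n →₀ ℕ)) (L2 : LinearOrder (Fin m × (Fin n →₀ ℕ)))
    (B : Set (MvPolynomial (Fin n) k × (Fin m → MvPolynomial (Fin n) k)))
    (f : MvPolynomial (Fin n) k) (u : Fin m → MvPolynomial (Fin n) k) : Prop :=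
  ∃ (N : ℕ) (p : Fin N → MvPolynomial (Fin n) k)
      (g : Fin N → MvPolynomial (Fin n) k × (Fin m → MvPolynomial (Fin n) k)),
    (∀ i, g i ∈ B) ∧ f = ∑ i, p i * (g i).1 ∧
    (∀ i, bsle L1 (lpp L1 (p i * (g i).1)) (lpp L1 f)) ∧
    (∀ i, bsle L2 (sig L2 (fun j => p i * (g i).2 j)) (sig L2 u))

/-- The polynomial part of the S-polynomial of the critical pair `(x^tg, gv, x^th, hw)`. -/
def spolyP (L1 : LinearOrder (Fin n →₀ ℕ))
    (gv hw : MvPolynomial (Fin n) k × (Fin m → MvPolynomial (Fin n) k))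
    (tg th : Fin n →₀ ℕ) : MvPolynomial (Fin n) k :=
  monomial tg (1 : k) * gv.1 - C (plc L1 gv.1 / plc L1 hw.1) * (monomial th (1 : k) * hw.1)

/-- The module part of the S-polynomial of the critical pair `(x^tg, gv, x^th, hw)`. -/
def spolyV (L1 : LinearOrder (Fin n →₀ ℕ))
    (gv hw : MvPolynomial (Fin n) k × (Fin m → MvPolynomial (Fin n) k))
    (tg th : Fin n →₀ ℕ) : Fin m → MvPolynomial (Fin n) k :=
  fun j =>
    monomial tg (1 : k) * gv.2 j - C (plc L1 gv.1 / plc L1 hw.1) * (monomial th (1 : k) * hw.2 j)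

/-- `f^[u]` is reducible (in one step, by a one-side-reduction) by the set `G`
of labeled polynomials. -/
def Reducible (L1 : LinearOrder (Fin n →₀ ℕ)) (L2 : LinearOrder (Fin m × (Fin n →₀ ℕ)))
    (G : Set (MvPolynomial (Fin n) k × (Fin m → MvPolynomial (Fin n) k)))
    (f : MvPolynomial (Fin n) k) (u : Fin m → MvPolynomial (Fin n) k) : Prop :=
  f ≠ 0 ∧ ∃ hw ∈ G, hw.1 ≠ 0 ∧ ∃ t : Fin n →₀ ℕ,
    WithBot.map (fun β => t + β) (lpp L1 hw.1) = lpp L1 f ∧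
    bslt L2 (sig L2 (tsmul t hw.2)) (sig L2 u)

/-- `x^t ⬝ fu` is generalized rewritable by the finite set `B` (w.r.t. the strict partial
order `r` on labeled polynomials). -/
def GenRewritable (L2 : LinearOrder (Fin m × (Fin n →₀ ℕ)))
    (B : Finset (MvPolynomial (Fin n) k × (Fin m → MvPolynomial (Fin n) k)))
    (r : (MvPolynomial (Fin n) k × (Fin m → MvPolynomial (Fin n) k)) →
         (MvPolynomial (Fin n) k × (Fin m → MvPolynomial (Fin n) k)) → Prop)
    (t : Fin n →₀ ℕ)
    (fu : MvPolynomial (Fin n) k × (Fin m → MvPolynomial (Fin n) k)) : Prop :=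
  ∃ gv ∈ B, gv.2 ≠ 0 ∧
    (∃ pq qq : Fin m × (Fin n →₀ ℕ), sig L2 gv.2 = ↑pq ∧ sig L2 fu.2 = ↑qq ∧
      pq.1 = qq.1 ∧ ∃ γ : Fin n →₀ ℕ, pq.2 + γ = t + qq.2) ∧
    r gv fu

/-- The position-over-term module order: `(i, α) ≺ (j, β)` iff `i > j`,
or `i = j` and `α ≺₁ β`. -/
def potLT (L1 : LinearOrder (Fin n →₀ ℕ)) (p q : Fin m × (Fin n →₀ ℕ)) : Prop :=
  q.1 < p.1 ∨ (p.1 = q.1 ∧ L1.lt p.2 q.2)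

/-- `p` is the signature of the module element `w` w.r.t. the linear order `lt`
on module monomials. -/
def IsSigWrt (lt : (Fin m × (Fin n →₀ ℕ)) → (Fin m × (Fin n →₀ ℕ)) → Prop)
    (w : Fin m → MvPolynomial (Fin n) k) (p : Fin m × (Fin n →₀ ℕ)) : Prop :=
  p ∈ msupport w ∧ ∀ q ∈ msupport w, q ≠ p → lt q p

end

section BotOrder

variable {β : Type*} [L : LinearOrder β]

theorem bsle_iff_le {a b : WithBot β} : bsle L a b ↔ a ≤ b := by
  cases a <;> cases b <;> simp [bsle]

theorem bsle_of_eq {a b : WithBot β} (h : a = b) : bsle L a b :=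
  bsle_iff_le.2 h.le

theorem bsle_antisymm {a b : WithBot β} (hab : bsle L a b) (hba : bsle L b a) : a = b :=
  le_antisymm (bsle_iff_le.1 hab) (bsle_iff_le.1 hba)

theorem bsle_max_max_iff {s t : Finset β} :
    bsle L s.max t.max ↔ ∀ a ∈ s, ∃ b ∈ t, a ≤ b := by
  have hle (a : β) : a ≤ t.max ↔ ∃ b ∈ t, a ≤ b :=
    (Finset.le_sup_iff (WithBot.bot_lt_coe a)).trans (by simp only [WithBot.coe_le_coe])
  simp only [bsle_iff_le, Finset.max_le_iff, hle]

end BotOrder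

section MaxSupport

variable {M : Type*} [LinearOrder M] [Add M] [AddLeftStrictMono M] [AddRightStrictMono M]

theorem uniqueAdd_of_max_eq {A B : Finset M} {a b : M} (ha : A.max = a) (hb : B.max = b) :
    UniqueAdd A B a b := fun _ _ hx hy h =>
  (add_eq_add_iff_eq_and_eq (Finset.le_max_of_eq hx ha) (Finset.le_max_of_eq hy hb)).1 h

theorem max_support_coeff_mul {R : Type*} [Semiring R] [NoZeroDivisors R]
    (p q : AddMonoidAlgebra R M) :
    (p * q).coeff.support.max = p.coeff.support.max + q.coeff.support.max := by
  have := addLeftMono_of_addLeftStrictMono M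
  have := addRightMono_of_addRightStrictMono M
  refine le_antisymm
    (AddMonoidAlgebra.sup_support_coeff_mul_le (fun a b => (WithBot.coe_add a b).le) p q) ?_
  cases ha : p.coeff.support.max with
  | bot => simp only [WithBot.bot_add, bot_le]
  | coe a =>
    cases hb : q.coeff.support.max with
    | bot => simp only [WithBot.add_bot, bot_le]
    | coe b =>
      have hcoeff : (p * q).coeff (a + b) = p.coeff a * q.coeff b :=
        AddMonoidAlgebra.coeff_mul_add_of_uniqueAdd (uniqueAdd_of_max_eq ha hb)
      have hmem : a + b ∈ (p * q).coeff.support := by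
        rw [Finsupp.mem_support_iff, hcoeff]
        exact mul_ne_zero (Finsupp.mem_support_iff.1 (Finset.mem_of_max ha))
          (Finsupp.mem_support_iff.1 (Finset.mem_of_max hb))
      exact Finset.le_max hmem

end MaxSupport

section LeadingMonomial

variable {k : Type*} [Field k] {n : ℕ} (L1 : LinearOrder (Fin n →₀ ℕ))

theorem lpp_eq_bot_iff {f : MvPolynomial (Fin n) k} : lpp L1 f = ⊥ ↔ f = 0 :=
  (@Finset.max_eq_bot _ L1 _).trans support_eq_empty

theorem lpp_monomial (t : Fin n →₀ ℕ) {c : k} (hc : c ≠ 0) : lpp L1 (monomial t c) = t := by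
  classical
  rw [lpp, support_monomial, if_neg hc, Finset.max_singleton]

theorem lpp_mul (h1add : ∀ a b c : Fin n →₀ ℕ, L1.lt a b → L1.lt (a + c) (b + c))
    (p q : MvPolynomial (Fin n) k) : lpp L1 (p * q) = lpp L1 p + lpp L1 q := by
  have hright : @AddRightStrictMono (Fin n →₀ ℕ) _ L1.toLT := ⟨fun c a b h => h1add a b c h⟩
  have hleft : @AddLeftStrictMono (Fin n →₀ ℕ) _ L1.toLT :=
    ⟨fun c a b h => by simpa only [add_comm c] using h1add a b c h⟩
  exact @max_support_coeff_mul _ L1 _ hleft hright k _ _ p q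

theorem exists_bsle_lpp_sum {ι : Type*} {s : Finset ι} {q : ι → MvPolynomial (Fin n) k}
    (h : ∑ i ∈ s, q i ≠ 0) : ∃ i ∈ s, bsle L1 (lpp L1 (∑ i ∈ s, q i)) (lpp L1 (q i)) := by
  obtain ⟨a, ha⟩ := WithBot.ne_bot_iff_exists.1 (mt (lpp_eq_bot_iff L1).1 h)
  have hmem : a ∈ (∑ i ∈ s, q i).support := @Finset.mem_of_max _ L1 _ _ ha.symm
  obtain ⟨i, hi, hai⟩ := Finset.mem_biUnion.1 (support_sum hmem)
  exact ⟨i, hi, ha ▸ bsle_iff_le.2 (@Finset.le_max _ L1 _ _ hai)⟩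

end LeadingMonomial

section Signature

variable {k : Type*} [Field k] {m n : ℕ} {L1 : LinearOrder (Fin n →₀ ℕ)}
  {L2 : LinearOrder (Fin m × (Fin n →₀ ℕ))} {u v : Fin m → MvPolynomial (Fin n) k}

theorem mem_msupport {p : Fin m × (Fin n →₀ ℕ)} : p ∈ msupport u ↔ p.2 ∈ (u p.1).support := by
  obtain ⟨i, α⟩ := p
  simp [msupport]

theorem bsle_sig_of_forall_bsle_lpp
    (h21 : ∀ (i : Fin m) (α β : Fin n →₀ ℕ), L1.lt α β → L2.lt (i, α) (i, β))
    (h : ∀ i, bsle L1 (lpp L1 (u i)) (lpp L1 (v i))) : bsle L2 (sig L2 u) (sig L2 v) := by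
  refine bsle_max_max_iff.2 fun ⟨i, α⟩ hα => ?_
  obtain ⟨β, hβ, hαβ⟩ := bsle_max_max_iff.1 (h i) α (mem_msupport.1 hα)
  have hmono : @Monotone _ _ L1.toPreorder L2.toPreorder (Prod.mk i) :=
    @StrictMono.monotone _ _ L1.toPartialOrder L2.toPreorder _ (h21 i)
  exact ⟨(i, β), mem_msupport.2 hβ, hmono hαβ⟩

theorem sig_eq_of_forall_lpp_eq
    (h21 : ∀ (i : Fin m) (α β : Fin n →₀ ℕ), L1.lt α β → L2.lt (i, α) (i, β))
    (h : ∀ i, lpp L1 (u i) = lpp L1 (v i)) : sig L2 u = sig L2 v :=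
  bsle_antisymm (bsle_sig_of_forall_bsle_lpp h21 fun i => bsle_of_eq (h i))
    (bsle_sig_of_forall_bsle_lpp h21 fun i => bsle_of_eq (h i).symm)

theorem sig_tsmul_eq_sig_mul
    (h1add : ∀ a b c : Fin n →₀ ℕ, L1.lt a b → L1.lt (a + c) (b + c))
    (h21 : ∀ (i : Fin m) (α β : Fin n →₀ ℕ), L1.lt α β → L2.lt (i, α) (i, β))
    {p : MvPolynomial (Fin n) k} {t : Fin n →₀ ℕ} (ht : lpp L1 p = t) :
    sig L2 (tsmul t v) = sig L2 fun i => p * v i :=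
  sig_eq_of_forall_lpp_eq h21 fun i => by
    rw [tsmul, lpp_mul L1 h1add, lpp_mul L1 h1add, lpp_monomial L1 t one_ne_zero, ht]

end Signature

theorem std_rep_basic_property_general {k : Type*} [Field k] {n m : ℕ}
    {L1 : LinearOrder (Fin n →₀ ℕ)} {L2 : LinearOrder (Fin m × (Fin n →₀ ℕ))}
    (h1add : ∀ a b c : Fin n →₀ ℕ, L1.lt a b → L1.lt (a + c) (b + c))
    (h21 : ∀ (i : Fin m) (α β : Fin n →₀ ℕ), L1.lt α β → L2.lt (i, α) (i, β))
    {B : Set (MvPolynomial (Fin n) k × (Fin m → MvPolynomial (Fin n) k))}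
    {f : MvPolynomial (Fin n) k} {u : Fin m → MvPolynomial (Fin n) k}
    (hf0 : f ≠ 0) (hstd : HasStdRep L1 L2 B f u) :
    ∃ gv ∈ B, gv.1 ≠ 0 ∧ ∃ t : Fin n →₀ ℕ,
      WithBot.map (fun β => t + β) (lpp L1 gv.1) = lpp L1 f ∧
      bsle L2 (sig L2 (tsmul t gv.2)) (sig L2 u) := by
  obtain ⟨N, p, g, hgB, rfl, hlpp, hsig⟩ := hstd
  obtain ⟨i, -, hi⟩ := exists_bsle_lpp_sum L1 hf0
  have hlead : lpp L1 (p i) + lpp L1 (g i).1 = lpp L1 (∑ i, p i * (g i).1) :=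
    lpp_mul L1 h1add (p i) (g i).1 ▸ bsle_antisymm (hlpp i) hi
  have hne : lpp L1 (p i) + lpp L1 (g i).1 ≠ ⊥ := hlead ▸ mt (lpp_eq_bot_iff L1).1 hf0
  obtain ⟨hp, hg⟩ := WithBot.add_ne_bot.1 hne
  obtain ⟨t, ht⟩ := WithBot.ne_bot_iff_exists.1 hp
  refine ⟨g i, hgB i, mt (lpp_eq_bot_iff L1).2 hg, t, ?_, ?_⟩
  · rw [← hlead, ← ht]
    cases lpp L1 (g i).1 <;> rfl
  · rw [sig_tsmul_eq_sig_mul h1add h21 ht.symm]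
    exact hsig i

/-- **Basic property of standard representations.** If the labeled polynomial `f^[u]`
(`f ≠ 0`) has a standard representation w.r.t. the set `B` of labeled polynomials, then
there exists `g^[v] ∈ B` with `g ≠ 0`, `lpp(g)` dividing `lpp(f)`, and
`s(x^t v) ⪯₂ s(u)` where `x^t = lpp(f)/lpp(g)`. -/
theorem std_rep_basic_property (k : Type*) [Field k] (n m : ℕ)
    (L1 : LinearOrder (Fin n →₀ ℕ)) (L2 : LinearOrder (Fin m × (Fin n →₀ ℕ)))
    (h1add : ∀ a b c : Fin n →₀ ℕ, L1.lt a b → L1.lt (a + c) (b + c))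
    (h1wf : WellFounded L1.lt)
    (h2add : ∀ (p q : Fin m × (Fin n →₀ ℕ)) (γ : Fin n →₀ ℕ),
      L2.lt p q → L2.lt (p.1, p.2 + γ) (q.1, q.2 + γ))
    (h21 : ∀ (i : Fin m) (α β : Fin n →₀ ℕ), L1.lt α β → L2.lt (i, α) (i, β))
    (fvec : Fin m → MvPolynomial (Fin n) k)
    (B : Set (MvPolynomial (Fin n) k × (Fin m → MvPolynomial (Fin n) k)))
    (hBlabeled : ∀ p ∈ B, p.1 = dotf fvec p.2)
    (f : MvPolynomial (Fin n) k) (u : Fin m → MvPolynomial (Fin n) k)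
    (hf : f = dotf fvec u) (hf0 : f ≠ 0)
    (hstd : HasStdRep L1 L2 B f u) :
    ∃ gv ∈ B, gv.1 ≠ 0 ∧ ∃ t : Fin n →₀ ℕ,
      WithBot.map (fun β => t + β) (lpp L1 gv.1) = lpp L1 f ∧
      bsle L2 (sig L2 (tsmul t gv.2)) (sig L2 u) :=
  std_rep_basic_property_general h1add h21 hf0 hstd
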